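/- arXiv:1501.06518 — 2 statements merged into one kernel-verified Lean document; each statement's English description precedes it below -/
import Mathlib

section
/- Let G be a finite simple graph that is 2-connected (G has at least three vertices, G is connected, and deleting any single vertex leaves G connected) and has tree-depth d. Then every depth-decomposition of the cycle matroid M(G) has depth h satisfying 4^h ≥ d; in particular, the branch-depth of M(G) is at least (1/2)·log₂ d. -/
/-!
Common definitions: rooted trees (encoded by a parent function), their depth,
depth-decompositions of matroids, matroid rank, circuits, contraction,
connectivity and components.
-/

/-- `u` is an ancestor of `v` (or equal to it) in the rooted tree encoded by `parent`. -/
def Anc {V : Type} (parent : V → V) (u v : V) : Prop := ∃ n : ℕ, parent^[n] v = u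

/-- `(root, parent)` encodes a rooted tree: the root is its own parent and every
vertex reaches the root by iterating `parent` (each non-root vertex is joined to its
parent by an edge). -/
def IsRootedTree {V : Type} (root : V) (parent : V → V) : Prop :=
  parent root = root ∧ ∀ v : V, ∃ n : ℕ, parent^[n] v = root

/-- The depth of a vertex in a rooted tree: the number of edges on the path from the
root to the vertex. -/
noncomputable def vdepth {V : Type} (root : V) (parent : V → V) (v : V) : ℕ :=
  sInf {n : ℕ | parent^[n] v = root}

/-- The depth of a rooted tree: the maximum number of edges on a path from the root
to a leaf, i.e. the maximal depth of a vertex. -/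
noncomputable def treeDepth {V : Type} (root : V) (parent : V → V) : ℕ :=
  sSup (Set.range (vdepth root parent))

/-- A leaf of a rooted tree: a vertex that is the parent of no other vertex. -/
def IsLeaf {V : Type} (parent : V → V) (v : V) : Prop := ∀ u : V, u ≠ v → parent u ≠ v

/-- The rank of a set `X` in a matroid `M`: the largest size of an independent subset
of `X`. -/
noncomputable def mrank {α : Type} (M : Matroid α) (X : Set α) : ℕ :=
  sSup {n : ℕ | ∃ I : Set α, I ⊆ X ∧ M.Indep I ∧ I.ncard = n}

/-- `(root, parent, f)` is a depth-decomposition of the matroid `M`: the tree is finite,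
the rank of `M` equals the number of edges of the tree (one edge per non-root vertex),
and the rank of any `X ⊆ M.E` is at most the number of edges of the union `T*(X)` of
the paths from the root to the vertices of `f(X)` (one edge per non-root vertex that is
an ancestor of, or equal to, some vertex of `f(X)`). -/
def IsDepthDecomp {α V : Type} (M : Matroid α) (root : V) (parent : V → V)
    (f : α → V) : Prop :=
  Finite V ∧ IsRootedTree root parent ∧
  mrank M M.E = Set.ncard {v : V | v ≠ root} ∧
  ∀ X : Set α, X ⊆ M.E →
    mrank M X ≤ Set.ncard {v : V | v ≠ root ∧ ∃ e ∈ X, Anc parent v (f e)}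

/-- `M` has a depth-decomposition of depth at most `d`. -/
def HasDepthDecompOfDepthLE {α : Type} (M : Matroid α) (d : ℕ) : Prop :=
  ∃ (V : Type) (root : V) (parent : V → V) (f : α → V),
    IsDepthDecomp M root parent f ∧ treeDepth root parent ≤ d

/-- The branch-depth of a matroid: the smallest depth of a depth-decomposition. -/
noncomputable def branchDepth {α : Type} (M : Matroid α) : ℕ :=
  sInf {d : ℕ | HasDepthDecompOfDepthLE M d}

/-- A circuit of a matroid: a minimal dependent set. -/
def IsCircuitOf {α : Type} (M : Matroid α) (C : Set α) : Prop :=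
  M.Dep C ∧ ∀ D : Set α, M.Dep D → D ⊆ C → D = C

/-- `N` is the contraction `M / F` of the matroid `M` by the set `F`: the ground set of
`N` is `M.E \ F`, and a set `I` disjoint from `F` is independent in `N` if and only if
`r(F ∪ I) = r(F) + |I|`. -/
def IsContractionBy {α : Type} (M : Matroid α) (F : Set α) (N : Matroid α) : Prop :=
  N.E = M.E \ F ∧
  ∀ I : Set α, N.Indep I ↔
    I ⊆ M.E \ F ∧ I.Finite ∧ mrank M (F ∪ I) = mrank M F + I.ncard

/-- A matroid is connected if its ground set is nonempty and any two distinct elements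
lie in a common circuit. -/
def IsConnectedM {α : Type} (M : Matroid α) : Prop :=
  M.E.Nonempty ∧
  ∀ x ∈ M.E, ∀ y ∈ M.E, x = y ∨ ∃ C : Set α, IsCircuitOf M C ∧ x ∈ C ∧ y ∈ C

/-- A component of a matroid: an equivalence class of the relation "equal or lying in a
common circuit" on the ground set. -/
def IsComponentOf {α : Type} (M : Matroid α) (K : Set α) : Prop :=
  ∃ x ∈ M.E,
    K = {y ∈ M.E | x = y ∨ ∃ C : Set α, IsCircuitOf M C ∧ x ∈ C ∧ y ∈ C}

/-- `(root, parent)` is a tree-depth decomposition of the graph `G`: a rooted tree on the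
vertex set of `G` such that every edge of `G` joins two vertices one of which is an
ancestor of the other. -/
def IsTreeDepthDecompOf {W : Type} (G : SimpleGraph W) (root : W) (parent : W → W) :
    Prop :=
  IsRootedTree root parent ∧
  ∀ u v : W, G.Adj u v → Anc parent u v ∨ Anc parent v u

/-- The tree-depth of a graph: the smallest depth of a rooted tree on its vertex set in
which the two endpoints of every edge are ancestor-related. -/
noncomputable def graphTreeDepth {W : Type} (G : SimpleGraph W) : ℕ :=
  sInf {t : ℕ | ∃ (root : W) (parent : W → W),
    IsTreeDepthDecompOf G root parent ∧ treeDepth root parent = t}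

/-- `M` is the cycle matroid of the graph `G`: its ground set is the edge set of `G` and
its independent sets are exactly the acyclic sets of edges of `G`. -/
def IsCycleMatroidOf {W : Type} (M : Matroid (Sym2 W)) (G : SimpleGraph W) : Prop :=
  M.E = G.edgeSet ∧
  ∀ I : Set (Sym2 W), M.Indep I ↔ I ⊆ G.edgeSet ∧ (SimpleGraph.fromEdgeSet I).IsAcyclic

/-!
Let `h` be the depth of a depth-decomposition and `C` a circuit. Extending `C` minus an element to a
base and discarding, for each base element outside `C`, one tree edge on its path to the root leaves
one tree edge fewer than `C` has elements, while every proper subset of `C` still satisfies the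
bound by the number of edges on its paths. Such a set has a common ancestor in what is left of the
tree; once that edge is deleted, the set splits into two sets of the same kind with shorter paths,
so `C` has at most `2 ^ h` elements. For the cycle matroid this says that every cycle of `G` has
length at most `L = 2 ^ h`.

By Whitney's theorem any two vertices of a 2-connected graph are joined by two internally disjoint
paths, which together form a cycle, so their distance is at most `L`. In a depth-first search tree,
the tree path between the ends of an edge closes up to a cycle, so every edge spans at most `L`
levels. Following a shortest path from the root, every vertex has depth at most `L * L = 4 ^ h`.
-/

section RootedTree

variable {V : Type} {root : V} {parent : V → V} {u v w : V}

theorem Anc.refl (parent : V → V) (v : V) : Anc parent v v := ⟨0, rfl⟩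

theorem Anc.trans (huv : Anc parent u v) (hvw : Anc parent v w) : Anc parent u w := by
  obtain ⟨m, rfl⟩ := huv
  obtain ⟨n, rfl⟩ := hvw
  exact ⟨m + n, Function.iterate_add_apply ..⟩

theorem anc_parent (parent : V → V) (v : V) : Anc parent (parent v) v := ⟨1, rfl⟩

theorem Anc.anc_parent_of_ne (h : Anc parent u v) (hne : u ≠ v) : Anc parent u (parent v) := by
  obtain ⟨_ | n, hn⟩ := h
  · exact absurd hn.symm hne
  · exact ⟨n, hn⟩

theorem Anc.total (hu : Anc parent u w) (hv : Anc parent v w) :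
    Anc parent u v ∨ Anc parent v u := by
  obtain ⟨m, rfl⟩ := hu
  obtain ⟨n, rfl⟩ := hv
  rcases le_total m n with h | h <;> obtain ⟨k, rfl⟩ := Nat.exists_eq_add_of_le' h
  · exact .inr ⟨k, (Function.iterate_add_apply ..).symm⟩
  · exact .inl ⟨k, (Function.iterate_add_apply ..).symm⟩

/-- A depth function of the tree encoded by `(root, parent)`: it vanishes at the root and
increases by one from a parent to its child. It certifies that the encoding is a rooted tree and
computes `vdepth`. -/
structure IsDepthFun (root : V) (parent : V → V) (δ : V → ℕ) : Prop where
  parent_root : parent root = root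
  apply_root : δ root = 0
  apply_of_ne : ∀ v, v ≠ root → δ v = δ (parent v) + 1

theorem IsRootedTree.isDepthFun_vdepth (h : IsRootedTree root parent) :
    IsDepthFun root parent (vdepth root parent) where
  parent_root := h.1
  apply_root := Nat.sInf_eq_zero.2 (.inl rfl)
  apply_of_ne v hv := by
    have iterate_vdepth (w : V) : parent^[vdepth root parent w] w = root := Nat.sInf_mem (h.2 w)
    have pos : vdepth root parent v ≠ 0 := fun h0 ↦ hv (by simpa [h0] using iterate_vdepth v)
    obtain ⟨k, hk⟩ := Nat.exists_eq_succ_of_ne_zero pos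
    apply le_antisymm
    · exact Nat.sInf_le (iterate_vdepth (parent v))
    · have := iterate_vdepth v
      rw [hk] at this ⊢
      exact Nat.succ_le_succ (Nat.sInf_le this)

namespace IsDepthFun

variable {δ : V → ℕ}

theorem isRootedTree (h : IsDepthFun root parent δ) : IsRootedTree root parent := by
  refine ⟨h.parent_root, fun v ↦ ?_⟩
  induction hn : δ v generalizing v with
  | zero =>
    by_cases hv : v = root
    · exact ⟨0, hv⟩
    · have := h.apply_of_ne v hv
      lia
  | succ n ih =>
    have hv : v ≠ root := by
      rintro rfl
      have := h.apply_root
      lia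
    obtain ⟨m, hm⟩ := ih (parent v) (by have := h.apply_of_ne v hv; lia)
    exact ⟨m + 1, hm⟩

theorem eq_vdepth (h : IsDepthFun root parent δ) (v : V) : δ v = vdepth root parent v := by
  have hvd := h.isRootedTree.isDepthFun_vdepth
  obtain ⟨n, hn⟩ := h.isRootedTree.2 v
  induction n generalizing v with
  | zero =>
    obtain rfl : v = root := hn
    rw [h.apply_root, hvd.apply_root]
  | succ n ih =>
    by_cases hv : v = root
    · rw [hv, h.apply_root, hvd.apply_root]
    · rw [h.apply_of_ne v hv, hvd.apply_of_ne v hv, ih (parent v) hn]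

end IsDepthFun

namespace IsRootedTree

theorem anc_root (h : IsRootedTree root parent) (v : V) : Anc parent root v := h.2 v

theorem eq_root_of_anc_root (h : IsRootedTree root parent) (hv : Anc parent v root) :
    v = root := by
  obtain ⟨n, rfl⟩ := hv
  exact Function.iterate_fixed h.1 n

theorem vdepth_root (h : IsRootedTree root parent) : vdepth root parent root = 0 :=
  h.isDepthFun_vdepth.apply_root

theorem vdepth_of_ne (h : IsRootedTree root parent) (hv : v ≠ root) :
    vdepth root parent v = vdepth root parent (parent v) + 1 :=
  h.isDepthFun_vdepth.apply_of_ne v hv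

theorem vdepth_lt_of_anc (h : IsRootedTree root parent) (huv : Anc parent u v) (hne : u ≠ v) :
    vdepth root parent u < vdepth root parent v := by
  obtain ⟨n, hn⟩ := huv
  induction n generalizing v with
  | zero => exact absurd hn.symm hne
  | succ n ih =>
    have hv : v ≠ root := by
      rintro rfl
      exact hne (h.eq_root_of_anc_root ⟨n + 1, hn⟩)
    rw [h.vdepth_of_ne hv, Nat.lt_succ_iff]
    by_cases hu : u = parent v
    · rw [hu]
    · exact (ih hu hn).le

theorem vdepth_le_of_anc (h : IsRootedTree root parent) (huv : Anc parent u v) :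
    vdepth root parent u ≤ vdepth root parent v := by
  rcases eq_or_ne u v with rfl | hne
  · exact le_rfl
  · exact (h.vdepth_lt_of_anc huv hne).le

theorem anc_antisymm (h : IsRootedTree root parent) (huv : Anc parent u v)
    (hvu : Anc parent v u) : u = v := by
  by_contra hne
  exact (h.vdepth_lt_of_anc huv hne).not_ge (h.vdepth_le_of_anc hvu)

theorem anc_of_vdepth_le (h : IsRootedTree root parent) (hu : Anc parent u w)
    (hv : Anc parent v w) (hle : vdepth root parent u ≤ vdepth root parent v) :
    Anc parent u v := by
  rcases eq_or_ne v u with rfl | hne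
  · exact .refl parent v
  · exact (hu.total hv).resolve_right fun hvu ↦ (h.vdepth_lt_of_anc hvu hne).not_ge hle

end IsRootedTree

theorem vdepth_le_treeDepth [Finite V] (root : V) (parent : V → V) (v : V) :
    vdepth root parent v ≤ treeDepth root parent :=
  le_csSup (Set.finite_range _).bddAbove ⟨v, rfl⟩

end RootedTree

section PathCircuit

variable {α V : Type} {root : V} {parent : V → V} {f : α → V} {S T : Finset V}
  {C D X Y : Finset α} {v : V}

open scoped Classical in
/-- The vertices of `S` on the paths from the root to the vertices of `f(X)`. With a non-root
vertex standing for the tree edge to its parent, this is `T*(X)` in the tree obtained by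
contracting the tree edges outside `S`. -/
noncomputable def pathVerts (parent : V → V) (f : α → V) (S : Finset V) (X : Finset α) :
    Finset V :=
  {v ∈ S | ∃ e ∈ X, Anc parent v (f e)}

theorem mem_pathVerts :
    v ∈ pathVerts parent f S X ↔ v ∈ S ∧ ∃ e ∈ X, Anc parent v (f e) := by
  simp only [pathVerts, Finset.mem_filter]

theorem pathVerts_subset : pathVerts parent f S X ⊆ S := fun _ hv ↦ (mem_pathVerts.1 hv).1

theorem pathVerts_mono (hXY : X ⊆ Y) : pathVerts parent f S X ⊆ pathVerts parent f S Y := by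
  grind [mem_pathVerts]

theorem pathVerts_union [DecidableEq α] [DecidableEq V] :
    pathVerts parent f S (X ∪ Y) = pathVerts parent f S X ∪ pathVerts parent f S Y := by
  grind [mem_pathVerts]

theorem pathVerts_pathVerts (hXY : X ⊆ Y) :
    pathVerts parent f (pathVerts parent f S Y) X = pathVerts parent f S X := by
  grind [mem_pathVerts]

theorem pathVerts_erase [DecidableEq V] :
    pathVerts parent f (S.erase v) X = (pathVerts parent f S X).erase v := by
  grind [mem_pathVerts]

theorem pathVerts_sdiff [DecidableEq V] :
    pathVerts parent f (S \ T) X = pathVerts parent f S X \ T := by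
  grind [mem_pathVerts]

/-- `C` behaves like a circuit whose rank is the number of tree edges in `S`: one more element
than `S`, and each proper subset `X` satisfies the independence bound `|X| ≤ |T*(X)|` of a
depth-decomposition. -/
structure IsPathCircuit (parent : V → V) (f : α → V) (S : Finset V) (C : Finset α) : Prop where
  card_eq : C.card = S.card + 1
  card_le : ∀ X ⊂ C, X.card ≤ (pathVerts parent f S X).card

theorem exists_isPathCircuit (h : (pathVerts parent f S X).card < X.card) :
    ∃ D ⊆ X, IsPathCircuit parent f (pathVerts parent f S D) D := by
  classical
  obtain ⟨D, ⟨hDX, hD⟩, hmin⟩ := WellFounded.has_min (wellFounded_lt (α := Finset α))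
    {D | D ⊆ X ∧ (pathVerts parent f S D).card < D.card} ⟨X, subset_rfl, h⟩
  have card_le_of_ssubset (Y : Finset α) (hY : Y ⊂ D) : Y.card ≤ (pathVerts parent f S Y).card :=
    not_lt.1 fun hlt ↦ hmin Y ⟨hY.subset.trans hDX, hlt⟩ hY
  refine ⟨D, hDX, ?_, fun Y hY ↦ ?_⟩
  · obtain ⟨e, he⟩ : D.Nonempty := Finset.card_pos.1 (Nat.zero_lt_of_lt hD)
    refine le_antisymm ?_ hD
    calc D.card = (D.erase e).card + 1 := (Finset.card_erase_add_one he).symm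
      _ ≤ (pathVerts parent f S (D.erase e)).card + 1 := by
        gcongr
        exact card_le_of_ssubset _ (Finset.erase_ssubset he)
      _ ≤ (pathVerts parent f S D).card + 1 := by
        gcongr
        exact pathVerts_mono (Finset.erase_subset e D)
  · rw [pathVerts_pathVerts hY.subset]
    exact card_le_of_ssubset Y hY

namespace IsPathCircuit

theorem exists_forall_anc (htree : IsRootedTree root parent) (h : IsPathCircuit parent f S C)
    (hC : 2 ≤ C.card) : ∃ c ∈ S, ∀ e ∈ C, Anc parent c (f e) := by
  classical
  obtain ⟨e, he⟩ : C.Nonempty := Finset.card_pos.1 (by lia)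
  have singleton_ssubset : {e} ⊂ C :=
    Finset.ssubset_iff_subset_ne.2 ⟨Finset.singleton_subset_iff.2 he, by rintro rfl; simp at hC⟩
  obtain ⟨c, hc, hmin⟩ := Finset.exists_min_image (pathVerts parent f S {e}) (vdepth root parent)
    (Finset.card_pos.1 (by simpa using h.card_le _ singleton_ssubset))
  simp only [mem_pathVerts, Finset.mem_singleton, exists_eq_left] at hc hmin
  refine ⟨c, hc.1, ?_⟩
  -- `c` is the highest vertex of `S` above `f e`, so no path from the root meets `S` both
  -- inside and outside the subtree of `c`: the bounds for `P` and `C \ P` add up.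
  let P := {x ∈ C | Anc parent c (f x)}
  by_contra! hP
  have hPC : P ⊂ C := Finset.filter_ssubset.2 (by simpa using hP)
  have hdisj : Disjoint (pathVerts parent f S P) (pathVerts parent f S (C \ P)) := by
    rw [Finset.disjoint_left]
    rintro v hv hv'
    obtain ⟨hvS, x, hx, hvx⟩ := mem_pathVerts.1 hv
    obtain ⟨-, y, hy, hvy⟩ := mem_pathVerts.1 hv'
    have hcy : ¬ Anc parent c (f y) := by grind
    have hvc : ¬ Anc parent c v := fun h' ↦ hcy (h'.trans hvy)
    have hvc' : Anc parent v c := ((Finset.mem_filter.1 hx).2.total hvx).resolve_left hvc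
    exact hvc (htree.anc_of_vdepth_le hc.2 (hvc'.trans hc.2) (hmin v ⟨hvS, hvc'.trans hc.2⟩))
  have heP : e ∈ P := Finset.mem_filter.2 ⟨he, hc.2⟩
  refine Nat.not_succ_le_self S.card ?_
  calc S.card + 1 = P.card + (C \ P).card := by
        rw [← h.card_eq, add_comm, Finset.card_sdiff_add_card_eq_card hPC.subset]
    _ ≤ (pathVerts parent f S P).card + (pathVerts parent f S (C \ P)).card :=
        add_le_add (h.card_le P hPC) (h.card_le _ (Finset.sdiff_ssubset hPC.subset ⟨e, heP⟩))
    _ = (pathVerts parent f S P ∪ pathVerts parent f S (C \ P)).card :=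
        (Finset.card_union_of_disjoint hdisj).symm
    _ ≤ S.card := Finset.card_le_card (Finset.union_subset pathVerts_subset pathVerts_subset)

theorem sdiff [DecidableEq α] [DecidableEq V] (h : IsPathCircuit parent f S C) (hv : v ∈ S)
    (hDC : D ⊆ C)
    (hD : IsPathCircuit parent f (pathVerts parent f (S.erase v) D) D) :
    IsPathCircuit parent f (S.erase v \ pathVerts parent f (S.erase v) D) (C \ D) where
  card_eq := by
    have := Finset.card_sdiff_add_card_eq_card hDC
    have := Finset.card_sdiff_add_card_eq_card
      (pathVerts_subset (parent := parent) (f := f) (S := S.erase v) (X := D))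
    have := Finset.card_erase_add_one hv
    have := h.card_eq
    have := hD.card_eq
    lia
  card_le X hX := by
    have hXD : Disjoint X D := Finset.disjoint_sdiff.symm.mono_left hX.subset
    have hunion : X ∪ D ⊂ C := by grind
    refine Nat.le_of_add_le_add_right (b := D.card) ?_
    calc X.card + D.card = (X ∪ D).card := (Finset.card_union_of_disjoint hXD).symm
      _ ≤ (pathVerts parent f S (X ∪ D)).card := h.card_le _ hunion
      _ ≤ (pathVerts parent f (S.erase v) (X ∪ D)).card + 1 := by
        rw [pathVerts_erase]
        exact Nat.le_add_of_sub_le Finset.pred_card_le_card_erase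
      _ = (pathVerts parent f (S.erase v \ pathVerts parent f (S.erase v) D) X).card
            + D.card := by
        rw [pathVerts_union, pathVerts_sdiff, ← Finset.sdiff_union_self_eq_union,
          Finset.card_union_of_disjoint Finset.sdiff_disjoint, hD.card_eq, add_assoc]

theorem card_le_two_pow (htree : IsRootedTree root parent) {h : ℕ}
    (hC : IsPathCircuit parent f S C) (hS : ∀ e ∈ C, (pathVerts parent f S {e}).card ≤ h) :
    C.card ≤ 2 ^ h := by
  classical
  induction h generalizing S C with
  | zero =>
    by_contra! hlt
    obtain ⟨c, hcS, hc⟩ := hC.exists_forall_anc htree hlt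
    obtain ⟨e, he⟩ := Finset.card_pos.1 (Nat.zero_lt_of_lt hlt)
    exact Finset.card_ne_zero_of_mem (mem_pathVerts.2 ⟨hcS, e, by simp, hc e he⟩)
      (Nat.le_zero.1 (hS e he))
  | succ h ih =>
    rcases Nat.lt_or_ge C.card 2 with hsmall | hlarge
    · exact (Nat.le_of_lt_succ hsmall).trans Nat.one_le_two_pow
    obtain ⟨c, hcS, hc⟩ := hC.exists_forall_anc htree hlarge
    have erase_le (e) (he : e ∈ C) : (pathVerts parent f (S.erase c) {e}).card ≤ h := by
      rw [pathVerts_erase, Finset.card_erase_of_mem (mem_pathVerts.2 ⟨hcS, e, by simp, hc e he⟩)]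
      exact Nat.sub_le_of_le_add (hS e he)
    have hlt : (pathVerts parent f (S.erase c) C).card < C.card := by
      rw [hC.card_eq, Nat.lt_succ_iff]
      exact Finset.card_le_card (pathVerts_subset.trans (Finset.erase_subset c S))
    obtain ⟨D, hDC, hD⟩ := exists_isPathCircuit hlt
    calc C.card = (C \ D).card + D.card := (Finset.card_sdiff_add_card_eq_card hDC).symm
      _ ≤ 2 ^ h + 2 ^ h := by
        gcongr
        · refine ih (hC.sdiff hcS hDC hD) fun e he ↦ ?_
          rw [pathVerts_sdiff]
          exact (Finset.card_le_card Finset.sdiff_subset).trans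
            (erase_le e (Finset.sdiff_subset he))
        · refine ih hD fun e he ↦ ?_
          rw [pathVerts_pathVerts (Finset.singleton_subset_iff.2 he)]
          exact erase_le e (hDC he)
      _ = 2 ^ (h + 1) := by ring

end IsPathCircuit

theorem IsRootedTree.card_pathVerts_singleton_le (htree : IsRootedTree root parent)
    (hS : root ∉ S) (e : α) :
    (pathVerts parent f S {e}).card ≤ vdepth root parent (f e) := by
  have mem_iff {v : V} : v ∈ pathVerts parent f S {e} ↔ v ∈ S ∧ Anc parent v (f e) := by
    simp [mem_pathVerts]
  rw [← Nat.add_sub_cancel (vdepth root parent (f e)) 1, ← Nat.card_Icc]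
  refine Finset.card_le_card_of_injOn (vdepth root parent) (fun v hv ↦ ?_) fun u hu v hv huv ↦ ?_
  · obtain ⟨hvS, hve⟩ := mem_iff.1 hv
    have hpos := htree.vdepth_of_ne (ne_of_mem_of_not_mem hvS hS)
    have hle := htree.vdepth_le_of_anc hve
    simp only [Finset.coe_Icc, Set.mem_Icc]
    lia
  · have hue := (mem_iff.1 hu).2
    have hve := (mem_iff.1 hv).2
    exact htree.anc_antisymm (htree.anc_of_vdepth_le hue hve huv.le)
      (htree.anc_of_vdepth_le hve hue huv.ge)

theorem exists_forall_card_le_pathVerts_erase [DecidableEq α] [DecidableEq V]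
    (htree : IsRootedTree root parent) {j : α}
    (hj : (pathVerts parent f S {j}).Nonempty) :
    ∃ v ∈ S, ∀ X : Finset α, j ∉ X → X.card ≤ (pathVerts parent f S X).card →
      (insert j X).card ≤ (pathVerts parent f S (insert j X)).card →
      X.card ≤ (pathVerts parent f (S.erase v) X).card := by
  obtain ⟨v, hv, hmax⟩ := Finset.exists_max_image _ (vdepth root parent) hj
  simp only [mem_pathVerts, Finset.mem_singleton, exists_eq_left] at hv hmax
  refine ⟨v, hv.1, fun X hjX hX hjX_le ↦ ?_⟩
  rw [pathVerts_erase]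
  by_cases hvX : v ∈ pathVerts parent f S X
  · -- A path from the root that reaches `v` contains all of the path to `f j` lying in `S`.
    have insert_eq : pathVerts parent f S (insert j X) = pathVerts parent f S X := by
      refine subset_antisymm (fun u hu ↦ ?_) (pathVerts_mono (Finset.subset_insert j X))
      obtain ⟨huS, x, hx, hux⟩ := mem_pathVerts.1 hu
      rcases Finset.mem_insert.1 hx with rfl | hx
      · obtain ⟨-, y, hy, hvy⟩ := mem_pathVerts.1 hvX
        exact mem_pathVerts.2
          ⟨huS, y, hy, (htree.anc_of_vdepth_le hux hv.2 (hmax u ⟨huS, hux⟩)).trans hvy⟩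
      · exact mem_pathVerts.2 ⟨huS, x, hx, hux⟩
    rw [Finset.card_erase_of_mem hvX]
    rw [insert_eq, Finset.card_insert_of_notMem hjX] at hjX_le
    exact Nat.le_sub_one_of_lt hjX_le
  · rwa [Finset.erase_eq_of_notMem hvX]

theorem exists_subset_forall_card_le_pathVerts [DecidableEq α]
    (htree : IsRootedTree root parent) {J : Finset α} (hC : C.Nonempty) (hCJ : Disjoint C J)
    (h : ∀ X ⊂ C, ∀ K ⊆ J, (X ∪ K).card ≤ (pathVerts parent f S (X ∪ K)).card) :
    ∃ T ⊆ S, T.card + J.card = S.card ∧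
      ∀ X ⊂ C, X.card ≤ (pathVerts parent f T X).card := by
  classical
  induction J using Finset.induction_on generalizing S with
  | empty => exact ⟨S, subset_rfl, rfl, fun X hX ↦ by simpa using h X hX ∅ subset_rfl⟩
  | insert j J hj ih =>
    rw [Finset.disjoint_insert_right] at hCJ
    have hjS : (pathVerts parent f S {j}).Nonempty :=
      Finset.card_pos.1 (by simpa using h ∅ hC.empty_ssubset {j} (by simp))
    obtain ⟨v, hvS, hv⟩ := exists_forall_card_le_pathVerts_erase htree hjS
    obtain ⟨T, hTS, hcard, hT⟩ := ih (S := S.erase v) hCJ.2 fun X hX K hK ↦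
      hv (X ∪ K) (by grind) (h X hX K (hK.trans (Finset.subset_insert j J))) (by
        rw [← Finset.union_insert]
        exact h X hX _ (Finset.insert_subset_insert j hK))
    refine ⟨T, hTS.trans (Finset.erase_subset v S), ?_, hT⟩
    rw [Finset.card_insert_of_notMem hj, ← add_assoc, hcard, Finset.card_erase_add_one hvS]

end PathCircuit

section DepthDecomp

variable {α V : Type} {M : Matroid α} {B C X : Set α} {root : V} {parent : V → V} {f : α → V}

theorem card_le_mrank {I : Finset α} (hI : M.Indep I) : I.card ≤ mrank M I := by
  refine le_csSup ⟨I.card, ?_⟩ ⟨I, subset_rfl, hI, Set.ncard_coe_finset I⟩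
  rintro _ ⟨K, hKI, -, rfl⟩
  simpa using Set.ncard_le_ncard hKI I.finite_toSet

theorem mrank_ground_le (hB : M.IsBase B) (hfin : B.Finite) : mrank M M.E ≤ B.ncard := by
  refine csSup_le' ?_
  rintro _ ⟨I, -, hI, rfl⟩
  obtain ⟨B', hB', hIB'⟩ := hI.exists_isBase_superset
  rw [hB.ncard_eq_ncard_of_isBase hB']
  exact Set.ncard_le_ncard hIB' (hB.finite_of_finite hfin hB')

theorem indep_union_sdiff_of_ssubset_isCircuit (hC : M.IsCircuit C) (hB : M.Indep B) {e : α}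
    (he : e ∈ C) (heB : C \ {e} ⊆ B) (hX : X ⊂ C) : M.Indep (X ∪ B \ C) := by
  obtain ⟨x, hx, hxX⟩ := Set.exists_of_ssubset hX
  have hcontract : (M.contract C).Indep (B \ C) :=
    (hC.sdiff_singleton_isBasis he).contract_indep_iff.2
      ⟨hB.subset (Set.union_subset Set.sdiff_subset heB), Set.disjoint_sdiff_right⟩
  refine ((hC.sdiff_singleton_isBasis hx).contract_indep_iff.1 hcontract).1.subset ?_
  rw [Set.union_comm]
  gcongr
  exact Set.subset_sdiff_singleton hX.subset hxX

theorem card_sdiff_add_card_of_isCircuit [DecidableEq α] {B C : Finset α} (hC : M.IsCircuit C)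
    (hB : M.Indep B) {e : α} (he : e ∈ C) (heB : (C : Set α) \ {e} ⊆ B) :
    (B \ C).card + C.card = B.card + 1 := by
  have heB' : e ∉ B := fun h ↦ hC.not_indep (hB.subset fun x hx ↦ by
    by_cases hxe : x = e
    · rwa [hxe]
    · exact heB ⟨hx, hxe⟩)
  have hunion : B ∪ C = insert e B := by
    ext x
    have := @heB x
    grind
  rw [Finset.card_sdiff_add_card, hunion, Finset.card_insert_of_notMem heB']

namespace IsDepthDecomp

theorem card_le_card_pathVerts [Fintype V] [DecidableEq V]
    (hdec : IsDepthDecomp M root parent f) {I : Finset α} (hI : M.Indep I) :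
    I.card ≤ (pathVerts parent f {root}ᶜ I).card := by
  refine (card_le_mrank hI).trans ((hdec.2.2.2 I hI.subset_ground).trans_eq ?_)
  rw [← Set.ncard_coe_finset]
  congr 1
  ext v
  simp [mem_pathVerts]

theorem finite_of_indep (hdec : IsDepthDecomp M root parent f) {I : Set α} (hI : M.Indep I) :
    I.Finite := by
  classical
  have := hdec.1
  have := Fintype.ofFinite V
  by_contra hinf
  obtain ⟨K, hKI, hK⟩ := Set.Infinite.exists_subset_card_eq hinf (Fintype.card V + 1)
  have hle := hdec.card_le_card_pathVerts (hI.subset hKI)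
  exact (hle.trans (Finset.card_le_univ _)).not_gt (by lia)

theorem ncard_le_of_isCircuit (hdec : IsDepthDecomp M root parent f) (hC : M.IsCircuit C) :
    C.ncard ≤ 2 ^ treeDepth root parent := by
  classical
  have := hdec.1
  have := Fintype.ofFinite V
  obtain ⟨e, he⟩ := hC.nonempty
  obtain ⟨B, hB, heB⟩ := (hC.sdiff_singleton_indep he).exists_isBase_superset
  have hBfin : B.Finite := hdec.finite_of_indep hB.indep
  have hCfin : C.Finite := (hBfin.subset heB).of_sdiff (Set.finite_singleton e)
  lift B to Finset α using hBfin
  lift C to Finset α using hCfin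
  have card_ground : ({root}ᶜ : Finset V).card ≤ B.card :=
    calc ({root}ᶜ : Finset V).card = mrank M M.E := by
          rw [hdec.2.2.1, ← Set.ncard_coe_finset]
          congr 1
          ext v
          simp
      _ ≤ B.card := by simpa using mrank_ground_le hB B.finite_toSet
  have card_base : B.card ≤ ({root}ᶜ : Finset V).card :=
    (hdec.card_le_card_pathVerts hB.indep).trans (Finset.card_le_card pathVerts_subset)
  obtain ⟨S, hS, hcard, hSC⟩ := exists_subset_forall_card_le_pathVerts (parent := parent) (f := f)
    (S := {root}ᶜ) hdec.2.1 (C := C) (J := B \ C) (by simpa using hC.nonempty)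
    Finset.disjoint_sdiff fun X hX K hK ↦ hdec.card_le_card_pathVerts <|
      (indep_union_sdiff_of_ssubset_isCircuit hC hB.indep he heB
        (Finset.coe_ssubset.2 hX)).subset (by
          rw [Finset.coe_union, ← Finset.coe_sdiff]
          gcongr)
  have card_circuit : C.card = S.card + 1 := by
    have := card_sdiff_add_card_of_isCircuit hC hB.indep he heB
    lia
  rw [Set.ncard_coe_finset]
  refine IsPathCircuit.card_le_two_pow hdec.2.1 ⟨card_circuit, hSC⟩ fun e _ ↦ ?_
  exact (hdec.2.1.card_pathVerts_singleton_le (fun h ↦ by simpa using hS h) e).trans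
    (vdepth_le_treeDepth root parent (f e))

end IsDepthDecomp

end DepthDecomp

section CycleMatroid

variable {W : Type*} {G : SimpleGraph W} {u v : W}

theorem isAcyclic_fromEdgeSet_of_isPath {p : G.Walk u v} (hp : p.IsPath) :
    (SimpleGraph.fromEdgeSet p.edgeSet).IsAcyclic := by
  induction p with
  | nil => simp [SimpleGraph.Walk.edgeSet]
  | @cons u w v h p ih =>
    obtain ⟨hp, hu⟩ := (SimpleGraph.Walk.cons_isPath_iff h p).1 hp
    have edges_eq : SimpleGraph.fromEdgeSet (SimpleGraph.Walk.cons h p).edgeSet =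
        SimpleGraph.fromEdgeSet p.edgeSet ⊔ SimpleGraph.edge u w := by
      rw [SimpleGraph.edge, ← SimpleGraph.fromEdgeSet_union, Set.union_singleton,
        SimpleGraph.Walk.edgeSet_cons]
    rw [edges_eq]
    refine (ih hp).sup_edge_of_not_reachable fun ⟨q⟩ ↦ ?_
    cases q with
    | nil => exact hu p.start_mem_support
    | cons h' q =>
      exact hu (p.fst_mem_support_of_mem_edges ((SimpleGraph.fromEdgeSet_adj _).1 h').1)

theorem eq_snd_or_eq_penultimate_of_mem_edges {c : G.Walk u u} (hc : c.IsCycle)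
    (hv : s(u, v) ∈ c.edges) : v = c.snd ∨ v = c.penultimate := by
  cases c with
  | nil => exact absurd rfl hc.ne_nil
  | cons h p =>
    rw [SimpleGraph.Walk.edges_cons, List.mem_cons] at hv
    rcases hv with hv | hv
    · exact .inl (by simpa using Sym2.congr_right.1 hv)
    · rw [SimpleGraph.Walk.penultimate_cons_of_not_nil _ _ (SimpleGraph.Walk.not_nil_of_ne h.ne')]
      exact .inr (((SimpleGraph.Walk.cons_isCycle_iff p h).1 hc).1.eq_penultimate_of_mem_edges hv)

theorem exists_isCycle_snd_eq_of_mem_edges {c : G.Walk u u} (hc : c.IsCycle) {a b : W}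
    (hab : s(a, b) ∈ c.edges) :
    ∃ c' : G.Walk a a, c'.IsCycle ∧ c'.snd = b ∧ c'.edgeSet = c.edgeSet := by
  classical
  have ha : a ∈ c.support := c.fst_mem_support_of_mem_edges hab
  have edgeSet_rotate : (c.rotate a ha).edgeSet = c.edgeSet :=
    Set.ext fun e ↦ (c.rotate_edges a ha).mem_iff
  have hrot : (c.rotate a ha).IsCycle := hc.rotate ha
  have hab' : s(a, b) ∈ (c.rotate a ha).edgeSet := edgeSet_rotate ▸ hab
  rcases eq_snd_or_eq_penultimate_of_mem_edges hrot hab' with hb | hb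
  · exact ⟨_, hrot, hb.symm, edgeSet_rotate⟩
  · exact ⟨_, hrot.reverse, by rw [SimpleGraph.Walk.snd_reverse, hb], by simpa using edgeSet_rotate⟩

theorem isAcyclic_fromEdgeSet_sdiff_of_isCycle {c : G.Walk u u} (hc : c.IsCycle) {e : Sym2 W}
    (he : e ∈ c.edges) : (SimpleGraph.fromEdgeSet (c.edgeSet \ {e})).IsAcyclic := by
  induction e with | h a b
  obtain ⟨c', hc', rfl, hcc'⟩ := exists_isCycle_snd_eq_of_mem_edges hc he
  refine (isAcyclic_fromEdgeSet_of_isPath hc'.isPath_tail).anti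
    (SimpleGraph.fromEdgeSet_mono ?_)
  rw [← hcc', Set.sdiff_singleton_subset_iff, ← SimpleGraph.Walk.edgeSet_cons
      (SimpleGraph.Walk.adj_snd hc'.not_nil),
    c'.cons_tail_eq hc'.not_nil]

theorem IsCycleMatroidOf.isCircuit_edgeSet {W : Type} {G : SimpleGraph W} {M : Matroid (Sym2 W)}
    (hM : IsCycleMatroidOf M G) {u : W} {c : G.Walk u u} (hc : c.IsCycle) :
    M.IsCircuit c.edgeSet := by
  have edgeSet_subset : c.edgeSet ⊆ G.edgeSet := fun _ he ↦ c.edges_subset_edgeSet he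
  rw [Matroid.isCircuit_iff_dep_forall_sdiff_singleton_indep, Matroid.dep_iff, hM.1]
  refine ⟨⟨fun hindep ↦ ?_, edgeSet_subset⟩, fun e he ↦ (hM.2 _).2
    ⟨Set.sdiff_subset.trans edgeSet_subset, isAcyclic_fromEdgeSet_sdiff_of_isCycle hc he⟩⟩
  have mem_fromEdgeSet (e) (he : e ∈ c.edges) :
      e ∈ (SimpleGraph.fromEdgeSet c.edgeSet).edgeSet := by
    rw [SimpleGraph.edgeSet_fromEdgeSet]
    exact ⟨he, G.not_isDiag_of_mem_edgeSet (edgeSet_subset he)⟩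
  exact ((hM.2 _).1 hindep).2 (c.transfer _ mem_fromEdgeSet) (hc.transfer mem_fromEdgeSet)

/-- The circumference of `G` is at most `L`: no cycle of `G` is longer than `L`. Forests satisfy
this for every `L`. -/
def CircumferenceLE {W : Type*} (G : SimpleGraph W) (L : ℕ) : Prop :=
  ∀ (v : W) (c : G.Walk v v), c.IsCycle → c.length ≤ L

theorem IsDepthDecomp.circumferenceLE {W V : Type} {G : SimpleGraph W} {M : Matroid (Sym2 W)}
    {root : V} {parent : V → V} {f : Sym2 W → V} (hdec : IsDepthDecomp M root parent f)
    (hM : IsCycleMatroidOf M G) : CircumferenceLE G (2 ^ treeDepth root parent) := by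
  classical
  intro v c hc
  calc c.length = c.edgeSet.ncard := by
        rw [← c.length_edges, ← SimpleGraph.Walk.coe_edges_toFinset, Set.ncard_coe_finset,
          List.toFinset_card_of_nodup hc.edges_nodup]
    _ ≤ 2 ^ treeDepth root parent := hdec.ncard_le_of_isCircuit (hM.isCircuit_edgeSet hc)

end CycleMatroid

section InternallyDisjoint

variable {W : Type*} {G : SimpleGraph W} {a b c w z : W} {L : ℕ}

theorem isPath_append {p : G.Walk a b} {q : G.Walk b c} (hp : p.IsPath) (hq : q.IsPath)
    (h : ∀ y ∈ p.support, y ∈ q.support → y = b) : (p.append q).IsPath := by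
  have hq' : (b :: q.support.tail).Nodup := by
    rw [SimpleGraph.Walk.cons_tail_support]
    exact hq.support_nodup
  rw [List.nodup_cons] at hq'
  rw [SimpleGraph.Walk.isPath_def, SimpleGraph.Walk.support_append]
  refine hp.support_nodup.append hq'.2 fun y hyp hyq ↦ ?_
  obtain rfl := h y hyp (List.mem_of_mem_tail hyq)
  exact hq'.1 hyq

theorem exists_isPath_notMem_support (hdel : (G.induce {w}ᶜ).Preconnected) (ha : a ≠ w)
    (hb : b ≠ w) : ∃ p : G.Walk a b, p.IsPath ∧ w ∉ p.support := by
  classical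
  obtain ⟨r⟩ := hdel ⟨a, ha⟩ ⟨b, hb⟩
  let p : G.Walk a b := r.map (SimpleGraph.Embedding.induce {w}ᶜ).toHom
  refine ⟨p.bypass, p.bypass_isPath, fun hw ↦ ?_⟩
  obtain ⟨y, -, hy⟩ := List.mem_map.1 (r.support_map _ ▸ p.support_bypass_subset_support hw)
  exact y.2 hy

/-- `P` and `Q` are internally disjoint paths: they meet only in their common ends. Two copies of
the same edge qualify. -/
structure IsInternallyDisjoint (P Q : G.Walk a b) : Prop where
  isPath_left : P.IsPath
  isPath_right : Q.IsPath
  eq_or_eq : ∀ y ∈ P.support, y ∈ Q.support → y = a ∨ y = b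

namespace IsInternallyDisjoint

variable {P Q : G.Walk a b}

theorem symm (h : IsInternallyDisjoint P Q) : IsInternallyDisjoint Q P :=
  ⟨h.isPath_right, h.isPath_left, fun y hQ hP ↦ h.eq_or_eq y hP hQ⟩

theorem exists_of_adj_of_isPath (h : IsInternallyDisjoint P Q) (hbc : G.Adj b c) (hca : c ≠ a)
    {R : G.Walk c z} (hR : R.IsPath) (hzb : z ≠ b) (hzP : z ∈ P.support)
    (hRP : ∀ y ∈ R.support, y ∈ P.support → y = z)
    (hRQ : ∀ y ∈ R.support, y ∈ Q.support → y = z) :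
    ∃ P' Q' : G.Walk a c, IsInternallyDisjoint P' Q' := by
  obtain ⟨P₁, P₂, hP₁, -, rfl⟩ := h.isPath_left.mem_support_iff_exists_append.1 hzP
  have mem_of_mem_left (y) (hy : y ∈ P₁.support) : y ∈ (P₁.append P₂).support :=
    SimpleGraph.Walk.support_subset_support_append_left P₁ P₂ hy
  have hbP₁ : b ∉ P₁.support := fun hb ↦
    h.isPath_left.ne_of_mem_support_of_append hzb.symm hb P₂.end_mem_support rfl
  refine ⟨P₁.append R.reverse, Q.concat hbc, ⟨?_, ?_, fun y hyP hyQ ↦ ?_⟩⟩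
  · refine isPath_append hP₁ hR.reverse fun y hyP hyR ↦ ?_
    rw [SimpleGraph.Walk.support_reverse, List.mem_reverse] at hyR
    exact hRP y hyR (mem_of_mem_left y hyP)
  · refine h.isPath_right.concat (fun hcQ ↦ ?_) _
    obtain rfl := hRQ c R.start_mem_support hcQ
    exact (h.eq_or_eq c hzP hcQ).elim hca hzb
  · rw [SimpleGraph.Walk.support_concat, List.mem_append, List.mem_singleton] at hyQ
    rw [SimpleGraph.Walk.mem_support_append_iff, SimpleGraph.Walk.support_reverse,
      List.mem_reverse] at hyP
    rcases hyQ with hyQ | hyc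
    · refine .inl ?_
      rcases hyP with hyP | hyR
      · exact (h.eq_or_eq y (mem_of_mem_left y hyP) hyQ).resolve_right fun hyb ↦ hbP₁ (hyb ▸ hyP)
      · obtain rfl := hRQ y hyR hyQ
        exact (h.eq_or_eq y hzP hyQ).resolve_right hzb
    · exact .inr hyc

theorem exists_of_adj (h : IsInternallyDisjoint P Q) (hdel : (G.induce {b}ᶜ).Preconnected)
    (hab : a ≠ b) (hbc : G.Adj b c) (hca : c ≠ a) :
    ∃ P' Q' : G.Walk a c, IsInternallyDisjoint P' Q' := by
  classical
  obtain ⟨R, hR, hbR⟩ := exists_isPath_notMem_support hdel hbc.ne' hab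
  obtain ⟨z, hzPQ, hzR, hfirst⟩ := R.exists_mem_support_forall_mem_support_imp_eq
    (P.support.toFinset ∪ Q.support.toFinset) ⟨a, by simp⟩
  simp only [Finset.mem_union, List.mem_toFinset] at hzPQ hfirst
  have hzb : z ≠ b := fun hzb ↦ hbR (hzb ▸ hzR)
  have hfirstP (y) (hyR : y ∈ (R.takeUntil z hzR).support) (hyP : y ∈ P.support) : y = z :=
    hfirst y (.inl hyP) hyR
  have hfirstQ (y) (hyR : y ∈ (R.takeUntil z hzR).support) (hyQ : y ∈ Q.support) : y = z :=
    hfirst y (.inr hyQ) hyR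
  rcases hzPQ with hzP | hzQ
  · exact h.exists_of_adj_of_isPath hbc hca (hR.takeUntil hzR) hzb hzP hfirstP hfirstQ
  · exact h.symm.exists_of_adj_of_isPath hbc hca (hR.takeUntil hzR) hzb hzQ hfirstQ hfirstP

end IsInternallyDisjoint

theorem exists_isInternallyDisjoint (hdel : ∀ w, (G.induce {w}ᶜ).Preconnected) (p : G.Walk b a)
    (hba : b ≠ a) : ∃ P Q : G.Walk a b, IsInternallyDisjoint P Q := by
  induction p with
  | nil => exact absurd rfl hba
  | @cons c b a h q ih =>
    by_cases hb : b = a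
    · subst hb
      exact ⟨h.symm.toWalk, h.symm.toWalk, .of_adj h.symm, .of_adj h.symm, by simp⟩
    · obtain ⟨P, Q, hPQ⟩ := ih hb
      exact hPQ.exists_of_adj (hdel b) (Ne.symm hb) h.symm hba

namespace CircumferenceLE

theorem length_le_of_adj (hL : CircumferenceLE G L) (hL1 : 1 ≤ L) (h : G.Adj a b)
    {p : G.Walk b a} (hp : p.IsPath) : p.length ≤ L := by
  by_cases hmem : s(a, b) ∈ p.edges
  · rwa [hp.length_eq_one_of_mem_edges (Sym2.eq_swap ▸ hmem)]
  · have := hL a _ ((SimpleGraph.Walk.cons_isCycle_iff p h).2 ⟨hp, hmem⟩)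
    rw [SimpleGraph.Walk.length_cons] at this
    lia

theorem length_le_of_isInternallyDisjoint (hL : CircumferenceLE G L) (hL1 : 1 ≤ L)
    {P Q : G.Walk a b} (h : IsInternallyDisjoint P Q) (hab : a ≠ b) : Q.length ≤ L := by
  cases P with
  | nil => exact absurd rfl hab
  | cons hadj P =>
    have hP := (SimpleGraph.Walk.cons_isPath_iff _ _).1 h.isPath_left
    have hPQ : (P.append Q.reverse).IsPath := by
      refine isPath_append hP.1 h.isPath_right.reverse fun y hyP hyQ ↦ ?_
      rw [SimpleGraph.Walk.support_reverse, List.mem_reverse] at hyQ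
      exact (h.eq_or_eq y (List.mem_cons_of_mem _ hyP) hyQ).resolve_left fun hya ↦
        hP.2 (hya ▸ hyP)
    have := hL.length_le_of_adj hL1 hadj hPQ
    rw [SimpleGraph.Walk.length_append, SimpleGraph.Walk.length_reverse] at this
    lia

theorem dist_le (hL : CircumferenceLE G L) (hL1 : 1 ≤ L) (hconn : G.Connected)
    (hdel : ∀ w, (G.induce {w}ᶜ).Preconnected) (a b : W) : G.dist a b ≤ L := by
  by_cases hab : a = b
  · simp [hab]
  · obtain ⟨p⟩ := hconn.preconnected b a
    obtain ⟨P, Q, hPQ⟩ := exists_isInternallyDisjoint hdel p (Ne.symm hab)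
    exact (SimpleGraph.dist_le Q).trans (hL.length_le_of_isInternallyDisjoint hL1 hPQ hab)

end CircumferenceLE

end InternallyDisjoint

section NormalTree

variable {W : Type} {G : SimpleGraph W} {root : W} {parent : W → W} {u v : W} {L : ℕ}

/-- `(root, parent)` encodes a rooted spanning tree of `G`. -/
structure IsSpanningTree (G : SimpleGraph W) (root : W) (parent : W → W) : Prop where
  isRootedTree : IsRootedTree root parent
  adj_parent : ∀ w, w ≠ root → G.Adj w (parent w)

theorem exists_isSpanningTree (hconn : G.Connected) (root : W) :
    ∃ parent, IsSpanningTree G root parent := by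
  classical
  have exists_closer (w) (hw : w ≠ root) : ∃ y, G.Adj w y ∧ G.dist w root = G.dist y root + 1 := by
    obtain ⟨p, hp⟩ := hconn.exists_walk_length_eq_dist w root
    cases p with
    | nil => exact absurd rfl hw
    | @cons _ y _ h q =>
      refine ⟨y, h, ?_⟩
      have dist_le_length := SimpleGraph.dist_le q
      have dist_triangle := hconn.dist_triangle (u := w) (v := y) (w := root)
      rw [SimpleGraph.dist_eq_one_iff_adj.2 h] at dist_triangle
      rw [SimpleGraph.Walk.length_cons] at hp
      lia
  choose! closer adj_closer dist_closer using exists_closer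
  have isDepthFun_dist : IsDepthFun root (Function.update closer root root) (G.dist · root) :=
    ⟨Function.update_self .., SimpleGraph.dist_self, fun w hw ↦ by
      rw [Function.update_of_ne hw, dist_closer w hw]⟩
  refine ⟨_, isDepthFun_dist.isRootedTree, fun w hw ↦ ?_⟩
  rw [Function.update_of_ne hw]
  exact adj_closer w hw

open scoped Classical in
theorem IsRootedTree.isDepthFun_update (h : IsRootedTree root parent) (huv : ¬ Anc parent u v)
    (hle : vdepth root parent u ≤ vdepth root parent v) :
    IsDepthFun root (Function.update parent u v) fun w ↦ vdepth root parent w +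
      if Anc parent u w then vdepth root parent v + 1 - vdepth root parent u else 0 where
  parent_root := by
    have hu : root ≠ u := fun hu ↦ huv (hu ▸ h.anc_root v)
    rw [Function.update_of_ne hu, h.1]
  apply_root := by
    have hu : ¬ Anc parent u root := fun hu ↦ huv (h.eq_root_of_anc_root hu ▸ h.anc_root v)
    rw [if_neg hu, h.vdepth_root]
  apply_of_ne w hw := by
    by_cases hwu : w = u
    · subst hwu
      rw [Function.update_self, if_pos (.refl parent w), if_neg huv]
      lia
    · have anc_iff : Anc parent u (parent w) ↔ Anc parent u w :=
        ⟨fun ha ↦ ha.trans (anc_parent parent w), fun ha ↦ ha.anc_parent_of_ne (Ne.symm hwu)⟩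
      simp only [Function.update_of_ne hwu, anc_iff, h.vdepth_of_ne hw]
      lia

namespace IsSpanningTree

-- Re-hanging the subtree of `u` below `v` would push it down and leave all other depths unchanged.
theorem anc_of_adj_of_forall_sum_le [Fintype W] (h : IsSpanningTree G root parent)
    (hmax : ∀ q, IsSpanningTree G root q → ∑ w, vdepth root q w ≤ ∑ w, vdepth root parent w)
    (huv : G.Adj u v) (hle : vdepth root parent u ≤ vdepth root parent v) : Anc parent u v := by
  classical
  by_contra hanc
  have hdepth := h.isRootedTree.isDepthFun_update hanc hle
  have hspan : IsSpanningTree G root (Function.update parent u v) := by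
    refine ⟨hdepth.isRootedTree, fun w hw ↦ ?_⟩
    by_cases hwu : w = u
    · subst hwu
      rwa [Function.update_self]
    · rw [Function.update_of_ne hwu]
      exact h.adj_parent w hw
  refine (hmax _ hspan).not_gt (Finset.sum_lt_sum (fun w _ ↦ ?_) ⟨u, Finset.mem_univ u, ?_⟩)
  · rw [← hdepth.eq_vdepth w]
    exact Nat.le_add_right ..
  · rw [← hdepth.eq_vdepth u, if_pos (.refl parent u)]
    lia

theorem exists_isPath_of_anc (h : IsSpanningTree G root parent) (huv : Anc parent u v) :
    ∃ p : G.Walk v u, p.IsPath ∧ vdepth root parent u + p.length = vdepth root parent v := by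
  obtain ⟨n, hn⟩ := huv
  suffices ∃ p : G.Walk v u, p.IsPath ∧
      vdepth root parent u + p.length = vdepth root parent v ∧
      ∀ x ∈ p.support, vdepth root parent x ≤ vdepth root parent v from
    this.imp fun _ hp ↦ ⟨hp.1, hp.2.1⟩
  induction n generalizing v with
  | zero =>
    obtain rfl : v = u := hn
    exact ⟨.nil, .nil, by simp⟩
  | succ n ih =>
    by_cases hv : v = root
    · subst hv
      obtain rfl := h.isRootedTree.eq_root_of_anc_root ⟨n + 1, hn⟩
      exact ⟨.nil, .nil, by simp⟩
    · obtain ⟨p, hp, hlen, hsupp⟩ := ih hn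
      have hdepth := h.isRootedTree.vdepth_of_ne hv
      refine ⟨.cons (h.adj_parent v hv) p, hp.cons fun hvp ↦ ?_, ?_, fun x hx ↦ ?_⟩
      · have := hsupp v hvp
        lia
      · rw [SimpleGraph.Walk.length_cons]
        lia
      · rcases List.mem_cons.1 hx with rfl | hx
        · exact le_rfl
        · exact (hsupp x hx).trans (by lia)

end IsSpanningTree

theorem exists_isSpanningTree_isTreeDepthDecompOf [Finite W] (hconn : G.Connected) :
    ∃ root parent, IsSpanningTree G root parent ∧ IsTreeDepthDecompOf G root parent := by
  classical
  have := Fintype.ofFinite W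
  obtain ⟨root⟩ := hconn.nonempty
  obtain ⟨parent, hspan, hmax⟩ := Set.exists_max_image {q | IsSpanningTree G root q}
    (fun q ↦ ∑ w, vdepth root q w) (Set.toFinite _) (exists_isSpanningTree hconn root)
  refine ⟨root, parent, hspan, hspan.isRootedTree, fun u v huv ↦ ?_⟩
  rcases le_total (vdepth root parent u) (vdepth root parent v) with hle | hle
  · exact .inl (hspan.anc_of_adj_of_forall_sum_le hmax huv hle)
  · exact .inr (hspan.anc_of_adj_of_forall_sum_le hmax huv.symm hle)

namespace CircumferenceLE

theorem vdepth_le_of_adj (hL : CircumferenceLE G L) (hL1 : 1 ≤ L)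
    (hspan : IsSpanningTree G root parent) (hdec : IsTreeDepthDecompOf G root parent)
    (huv : G.Adj u v) : vdepth root parent v ≤ vdepth root parent u + L := by
  rcases hdec.2 u v huv with hanc | hanc
  · obtain ⟨p, hp, hlen⟩ := hspan.exists_isPath_of_anc hanc
    have := hL.length_le_of_adj hL1 huv hp
    lia
  · exact (hspan.isRootedTree.vdepth_le_of_anc hanc).trans (Nat.le_add_right ..)

theorem vdepth_le_of_walk (hL : CircumferenceLE G L) (hL1 : 1 ≤ L)
    (hspan : IsSpanningTree G root parent) (hdec : IsTreeDepthDecompOf G root parent)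
    (p : G.Walk u v) : vdepth root parent v ≤ vdepth root parent u + L * p.length := by
  induction p with
  | nil => simp
  | cons h p ih =>
    have := hL.vdepth_le_of_adj hL1 hspan hdec h
    rw [SimpleGraph.Walk.length_cons]
    lia

theorem graphTreeDepth_le [Finite W] (hL : CircumferenceLE G L) (hL1 : 1 ≤ L)
    (hconn : G.Connected) (hdel : ∀ w, (G.induce {w}ᶜ).Preconnected) :
    graphTreeDepth G ≤ L ^ 2 := by
  obtain ⟨root, parent, hspan, hdec⟩ := exists_isSpanningTree_isTreeDepthDecompOf hconn
  have le_treeDepth : graphTreeDepth G ≤ treeDepth root parent :=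
    Nat.sInf_le ⟨root, parent, hdec, rfl⟩
  refine le_treeDepth.trans (csSup_le' (Set.forall_mem_range.2 fun w ↦ ?_))
  obtain ⟨p, hp⟩ := hconn.exists_walk_length_eq_dist root w
  calc vdepth root parent w ≤ vdepth root parent root + L * p.length :=
        hL.vdepth_le_of_walk hL1 hspan hdec p
    _ = L * G.dist root w := by rw [hspan.isRootedTree.vdepth_root, zero_add, hp]
    _ ≤ L ^ 2 := by
        rw [sq]
        exact Nat.mul_le_mul_left L (hL.dist_le hL1 hconn hdel root w)

end CircumferenceLE

end NormalTree

/-- Let `G` be a finite simple 2-connected graph (at least three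
vertices, connected, and connected after deleting any single vertex) of tree-depth `d`.
Then every depth-decomposition of the cycle matroid `M(G)` of depth `h` satisfies
`4 ^ h ≥ d`; in particular, the branch-depth of `M(G)` is at least `(1/2) log₂ d`. -/
theorem cycleMatroid_depth_of_twoConnected {W : Type} [Fintype W]
    (G : SimpleGraph W) (hcard : 3 ≤ Fintype.card W) (hconn : G.Connected)
    (hdel : ∀ w : W, (SimpleGraph.induce ({w}ᶜ : Set W) G).Connected)
    (d : ℕ) (hd : graphTreeDepth G = d)
    (M : Matroid (Sym2 W)) (hM : IsCycleMatroidOf M G) :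
    ∀ (V : Type) (root : V) (parent : V → V) (f : Sym2 W → V),
      IsDepthDecomp M root parent f → d ≤ 4 ^ treeDepth root parent := by
  intro V root parent f hdec
  calc d = graphTreeDepth G := hd.symm
    _ ≤ (2 ^ treeDepth root parent) ^ 2 :=
      (hdec.circumferenceLE hM).graphTreeDepth_le Nat.one_le_two_pow hconn
        fun w ↦ (hdel w).preconnected
    _ = 4 ^ treeDepth root parent := by rw [pow_right_comm]; norm_num
end

section
/- Let M be a finite matroid and k ≥ 0. Let e₁, …, e_k be distinct elements of M and let C₀, C₁, …, C_k be subsets of the ground set of M such that |C_i| ≥ 3 for all 0 ≤ i ≤ k, C_{i−1} ∩ C_i = {e_i} for all 1 ≤ i ≤ k, and C_i ∩ C_j = ∅ whenever |i − j| ≥ 2. Let e₀ ∈ C₀ \ {e₁}, and for each 1 ≤ i ≤ k let e'_i ∈ C_{i−1} \ {e_{i−1}, e_i}. Define matroids by M₀ = M and M_i = M_{i−1} / (C_{i−1} \ {e_i, e'_i}) for 1 ≤ i ≤ k. If C_i is a circuit of M_i for every 0 ≤ i ≤ k, then M contains a circuit whose size L satisfies L² ≥ |C₀| + |C₁| + ⋯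 + |C_k|. -/
/-!
Contracting `F = C \ {f, f'}` in a circuit `C` makes `f` and `f'` parallel. So if `D` is a circuit
of `M ／ F` meeting `C` only in `f`, then so is `D - f + f'`. For any `e ∈ F`, a circuit of `M`
that extends `D` can be traded, by strong elimination with `C`, for one that contains `e` and
extends `D` or `D - f + f'`. Hence each contraction undone lengthens the circuit by at least one,
and lifting `C_j` from `M_j` to `M` yields a circuit of size at least `|C_j| + j`. A longest
circuit `Z` among these satisfies `|C_j| ≤ |Z|` for all `j` and `k + 1 ≤ |Z|`, so
`|C_0| + ⋯ + |C_k| ≤ (k + 1)|Z| ≤ |Z|²`.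
-/

open Matroid Set

section Rank

theorem contract_indep_iff_eRk_union_eq {α : Type*} {M : Matroid α} {F I : Set α}
    (hF : M.IsRkFinite F) (hI : I.Finite) (hFI : Disjoint F I) :
    (M ／ F).Indep I ↔ M.eRk (F ∪ I) = M.eRk F + I.encard := by
  obtain ⟨B, hB⟩ := M.exists_isBasis' F
  have hIB : Disjoint I B := (hFI.mono_left hB.subset).symm
  rw [hB.contract_indep_iff, and_iff_left hFI,
    indep_iff_eRk_eq_encard_of_finite (hI.union (hF.finite_of_isBasis' hB)),
    union_comm I, hB.eRk_eq_eRk_union, encard_union_eq hIB.symm, hB.encard_eq_eRk]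

theorem eq_of_forall_finite_indep_iff {α : Type*} {M N : Matroid α} [N.RankFinite]
    (hE : N.E = M.E) (h : ∀ I ⊆ N.E, I.Finite → (N.Indep I ↔ M.Indep I)) : N = M := by
  refine ext_indep hE fun I hIE => ⟨fun hI => (h I hIE hI.finite).1 hI, fun hI => ?_⟩
  exact indep_of_forall_finite_subset_indep I fun J hJI hJ =>
    (h J (hJI.trans hIE) hJ).2 (hI.subset hJI)

variable {α : Type} {M N : Matroid α} {C F X : Set α}

theorem isCircuitOf_iff_isCircuit : IsCircuitOf M C ↔ M.IsCircuit C :=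
  isCircuit_iff.symm

theorem cast_mrank_eq_eRk (hX : M.IsRkFinite X) : (mrank M X : ℕ∞) = M.eRk X := by
  obtain ⟨B, hB⟩ := M.exists_isBasis' X
  have hBfin : B.Finite := hX.finite_of_isBasis' hB
  have hmax : IsGreatest {n : ℕ | ∃ I ⊆ X, M.Indep I ∧ I.ncard = n} B.ncard := by
    refine ⟨⟨B, hB.subset, hB.indep, rfl⟩, ?_⟩
    rintro _ ⟨I, hIX, hI, rfl⟩
    have hle : I.encard ≤ B.encard := hB.encard_eq_eRk ▸ hI.encard_le_eRk_of_subset hIX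
    exact ENat.toNat_le_toNat hle hBfin.encard_lt_top.ne
  rw [mrank, hmax.csSup_eq, hBfin.cast_ncard_eq, hB.encard_eq_eRk]

theorem IsContractionBy.eq_contract (h : IsContractionBy M F N) (hF : M.IsRkFinite F) :
    N = M ／ F := by
  obtain ⟨hE, hindep⟩ := h
  have : N.RankFinite :=
    let ⟨B, hB⟩ := N.exists_isBase
    hB.rankFinite_of_finite ((hindep B).1 hB.indep).2.1
  refine eq_of_forall_finite_indep_iff hE fun I hIE hI => ?_
  have hIMF : I ⊆ M.E \ F := hE ▸ hIE
  rw [hindep, and_iff_right hIMF, and_iff_right hI,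
    contract_indep_iff_eRk_union_eq hF hI (subset_sdiff.1 hIMF).2.symm, ← cast_mrank_eq_eRk hF,
    ← cast_mrank_eq_eRk (hF.union (isRkFinite_of_finite M hI)), ← hI.cast_ncard_eq]
  norm_cast

end Rank

section Lift

variable {α : Type*} {M : Matroid α} {C D : Set α} {e f f' : α}

theorem isCircuit_insert_sdiff_singleton_of_isCircuit_pair (hD : M.IsCircuit D)
    (hff' : M.IsCircuit {f, f'}) (hf : f ∈ D) (hf' : f' ∉ D) :
    M.IsCircuit (insert f' (D \ {f})) := by
  have hf'mem : f' ∈ ({f, f'} : Set α) := mem_insert_of_mem f rfl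
  obtain ⟨K, hKs, hK, hf'K⟩ := hff'.strong_elimination hD (mem_insert f _) hf hf'mem hf'
  have hfK : f ∉ K := fun h => (hKs h).2 rfl
  have hKD : K ⊆ insert f' (D \ {f}) := fun x hx => by
    obtain ⟨(rfl | rfl) | hxD, hxf⟩ := hKs hx
    exacts [(hxf rfl).elim, mem_insert _ _, .inr ⟨hxD, hxf⟩]
  obtain ⟨L, hLs, hL, -⟩ := hff'.strong_elimination hK hf'mem hf'K (mem_insert f _) hfK
  have hLD : L = D := hL.eq_of_subset_isCircuit hD (by grind)
  have hDK : insert f' (D \ {f}) ⊆ K := by grind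
  exact hKD.antisymm hDK ▸ hK

theorem exists_isCircuit_encard_add_one_le_of_contract (hC : M.IsCircuit C) (hf : f ∈ C)
    (hf' : f' ∈ C \ {f}) (he : e ∈ C \ {f, f'}) (hD : (M ／ (C \ {f, f'})).IsCircuit D)
    (hCD : C ∩ D = {f}) :
    ∃ Z ⊆ C ∪ D, M.IsCircuit Z ∧ e ∈ Z ∧ D.encard + 1 ≤ Z.encard := by
  set F := C \ {f, f'}
  have hfD : f ∈ D := (hCD.ge rfl).2
  have heD : e ∉ D := fun h => he.2 (.inl (hCD.le ⟨he.1, h⟩))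
  have hf'D : f' ∉ D := fun h => hf'.2 (hCD.le ⟨hf'.1, h⟩)
  have encard_add_one_le {Y D' : Set α} (hDY : D' ⊆ Y) (heY : e ∈ Y) (heD' : e ∉ D') :
      D'.encard + 1 ≤ Y.encard :=
    encard_insert_of_notMem heD' ▸ encard_le_encard (insert_subset heY hDY)
  obtain ⟨Z, hZ, hDZ, hZs⟩ := hD.exists_subset_isCircuit_of_contract
  by_cases heZ : e ∈ Z
  · exact ⟨Z, by grind, hZ, heZ, encard_add_one_le hDZ heZ heD⟩
  obtain ⟨Y, hYs, hY, heY⟩ := hC.strong_elimination hZ hf (hDZ hfD) he.1 heZ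
  have hYCD : Y ⊆ C ∪ D := by grind
  have hpair : (M ／ F).IsCircuit {f, f'} :=
    hC.contract_sdiff_isCircuit (insert_nonempty _ _) (pair_subset hf hf'.1)
  have hD' : (M ／ F).IsCircuit (insert f' (D \ {f})) :=
    isCircuit_insert_sdiff_singleton_of_isCircuit_pair hD hpair hfD hf'D
  have hF_indep : M.Indep F := hC.ssubset_indep (by grind)
  have hYF : (M ／ F).Dep (Y \ F) :=
    hY.contract_dep_of_not_subset fun h => hY.not_indep (hF_indep.subset h)
  have hYF_eq : Y \ F = insert f' (D \ {f}) := hD'.eq_of_dep_subset hYF (by grind)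
  refine ⟨Y, hYCD, hY, heY, ?_⟩
  rw [← encard_exchange hf'D hfD]
  exact encard_add_one_le (hYF_eq ▸ sdiff_subset) heY (by grind)

end Lift

/-- A chain of circuits `C 0, …, C k`: consecutive ones share the single element `e (i + 1)`, all
others are disjoint, and `C i` is a circuit of `Ms i`, where each `Ms (i + 1)` is obtained from
`Ms i` by contracting all of `C i` but `e (i + 1)` and a further element `e' i` (the paper's
`e'_{i+1}`). The element `e 0` of `C 0` is the free end at which a chain can be prolonged. -/
structure IsCircuitChain {α : Type*} {k : ℕ} (Ms : Fin (k + 1) → Matroid α)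
    (C : Fin (k + 1) → Set α) (e : Fin (k + 1) → α) (e' : Fin k → α) : Prop where
  isCircuit : ∀ i, (Ms i).IsCircuit (C i)
  eq_contract : ∀ i : Fin k, Ms i.succ = Ms i.castSucc ／ (C i.castSucc \ {e i.succ, e' i})
  inter_eq : ∀ i : Fin k, C i.castSucc ∩ C i.succ = {e i.succ}
  disjoint : ∀ i j : Fin (k + 1), i.val + 2 ≤ j.val → Disjoint (C i) (C j)
  e_zero_mem : e 0 ∈ C 0
  e_zero_ne : ∀ i : Fin (k + 1), i.val = 1 → e 0 ≠ e i
  e'_mem : ∀ i : Fin k, e' i ∈ C i.castSucc \ {e i.castSucc, e i.succ}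

namespace IsCircuitChain

variable {α : Type*} {k : ℕ}

section Tail

variable {Ms : Fin (k + 2) → Matroid α} {C : Fin (k + 2) → Set α} {e : Fin (k + 2) → α}
  {e' : Fin (k + 1) → α}

theorem inter_iUnion_tail (h : IsCircuitChain Ms C e e') : C 0 ∩ ⋃ i, Fin.tail C i = {e 1} := by
  have hinter : C 0 ∩ C 1 = {e 1} := h.inter_eq 0
  refine subset_antisymm ?_ (hinter ▸ inter_subset_inter_right _ (subset_iUnion (Fin.tail C) 0))
  rintro x ⟨hx₀, hx⟩
  obtain ⟨i, hxi⟩ := mem_iUnion.1 hx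
  cases i using Fin.cases with
  | zero => exact hinter.subset ⟨hx₀, hxi⟩
  | succ i => exact ((h.disjoint 0 i.succ.succ (by simp)).notMem_of_mem_left hx₀ hxi).elim

theorem tail (h : IsCircuitChain Ms C e e') :
    IsCircuitChain (Fin.tail Ms) (Fin.tail C) (Fin.tail e) (Fin.tail e') where
  isCircuit i := h.isCircuit i.succ
  eq_contract i := h.eq_contract i.succ
  inter_eq i := h.inter_eq i.succ
  disjoint i j hij := h.disjoint i.succ j.succ (by simp only [Fin.val_succ]; lia)
  e_zero_mem := ((h.inter_eq 0).ge rfl).2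
  e_zero_ne i hi heq := by
    have he₁ : Fin.tail e 0 ∈ C 0 := ((h.inter_eq 0).ge rfl).1
    have he₂ : Fin.tail e i ∈ C i.succ := ((h.inter_eq i).ge rfl).2
    exact (h.disjoint 0 i.succ (by simp [hi])).ne_of_mem he₁ he₂ heq
  e'_mem i := h.e'_mem i.succ

end Tail

theorem exists_isCircuit_encard_add_le {Ms : Fin (k + 1) → Matroid α} {C : Fin (k + 1) → Set α}
    {e : Fin (k + 1) → α} {e' : Fin k → α} (h : IsCircuitChain Ms C e e') (j : Fin (k + 1)) :
    ∃ Z ⊆ ⋃ i, C i, (Ms 0).IsCircuit Z ∧ e 0 ∈ Z ∧ (C j).encard + j.val ≤ Z.encard := by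
  induction k with
  | zero =>
    obtain rfl := Fin.fin_one_eq_zero j
    exact ⟨C 0, subset_iUnion C 0, h.isCircuit 0, h.e_zero_mem, by simp⟩
  | succ k ih =>
    cases j using Fin.cases with
    | zero => exact ⟨C 0, subset_iUnion C 0, h.isCircuit 0, h.e_zero_mem, by simp⟩
    | succ j =>
      obtain ⟨D, hDC, hD, heD, hDcard⟩ := ih h.tail j
      have he₁ : e 1 ∈ C 0 := ((h.inter_eq 0).ge rfl).1
      have hCD : C 0 ∩ D = {e 1} :=
        ((inter_subset_inter_right _ hDC).trans h.inter_iUnion_tail.subset).antisymm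
          (singleton_subset_iff.2 ⟨he₁, heD⟩)
      obtain ⟨he'C, he'⟩ : e' 0 ∈ C 0 ∧ e' 0 ∉ ({e 0, e 1} : Set α) := h.e'_mem 0
      have he'₁ : e' 0 ∈ C 0 \ {e 1} := ⟨he'C, fun h => he' (.inr h)⟩
      have he₀ : e 0 ∈ C 0 \ {e 1, e' 0} := by
        refine ⟨h.e_zero_mem, ?_⟩
        rintro (heq | heq)
        exacts [h.e_zero_ne 1 rfl heq, he' (.inl heq.symm)]
      obtain ⟨Z, hZCD, hZ, heZ, hZcard⟩ := exists_isCircuit_encard_add_one_le_of_contract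
        (h.isCircuit 0) he₁ he'₁ he₀ (h.eq_contract 0 ▸ hD) hCD
      refine ⟨Z, hZCD.trans (union_subset (subset_iUnion C 0) (hDC.trans ?_)), hZ, heZ, ?_⟩
      · exact iUnion_subset fun i => subset_iUnion C i.succ
      · calc (C j.succ).encard + j.succ.val = (C j.succ).encard + j.val + 1 := by
              rw [Fin.val_succ, Nat.cast_add_one, add_assoc]
          _ ≤ D.encard + 1 := by gcongr; exact hDcard
          _ ≤ Z.encard := hZcard

end IsCircuitChain

theorem exists_circuit_sq_ge_sum_of_circuit_chain_general {α : Type*} {k : ℕ}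
    {Ms : Fin (k + 1) → Matroid α} {C : Fin (k + 1) → Set α} {e : Fin (k + 1) → α}
    {e' : Fin k → α} (h : IsCircuitChain Ms C e e') :
    ∃ Z ⊆ ⋃ i, C i, (Ms 0).IsCircuit Z ∧ ∑ i, (C i).encard ≤ Z.encard ^ 2 := by
  choose Z hZC hZ _ hcard using h.exists_isCircuit_encard_add_le
  obtain ⟨m, hmax⟩ := Finite.exists_max fun j => (Z j).encard
  have hC_le (i) : (C i).encard ≤ (Z m).encard :=
    le_self_add.trans <| (hcard i).trans (hmax i)
  have hk_le : (k + 1 : ℕ∞) ≤ (Z m).encard :=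
    calc (k + 1 : ℕ∞) = 1 + (Fin.last k).val := by rw [Fin.val_last, add_comm]
      _ ≤ (C (Fin.last k)).encard + (Fin.last k).val := by
        gcongr; exact one_le_encard_iff_nonempty.2 (h.isCircuit _).nonempty
      _ ≤ (Z m).encard := (hcard _).trans (hmax _)
  refine ⟨Z m, hZC m, hZ m, ?_⟩
  calc ∑ i, (C i).encard ≤ ∑ _i : Fin (k + 1), (Z m).encard := Finset.sum_le_sum fun i _ => hC_le i
    _ = (k + 1) * (Z m).encard := by simp
    _ ≤ (Z m).encard ^ 2 := by rw [sq]; gcongr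

/-- **Under the chain-of-circuits hypotheses, `M` has a circuit whose size `L` satisfies `L² ≥ |C₀| + ⋯ + |C_k|`.** -/
theorem exists_circuit_sq_ge_sum_of_circuit_chain {α : Type} (M : Matroid α) [M.Finite] (k : ℕ)
    -- `e 0` is the element `e₀ ∈ C₀`; `e 1, …, e k` are the elements `e₁, …, e_k`.
    (e : Fin (k + 1) → α) (he : ∀ i : Fin (k + 1), e i ∈ M.E)
    -- the elements `e₁, …, e_k` are distinct
    (hinj : ∀ i j : Fin (k + 1), 1 ≤ i.val → 1 ≤ j.val → e i = e j → i = j)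
    (C : Fin (k + 1) → Set α) (hCE : ∀ i : Fin (k + 1), C i ⊆ M.E)
    -- `|C_i| ≥ 3` for all `i`
    (hcard : ∀ i : Fin (k + 1), 3 ≤ (C i).ncard)
    -- `C_{i-1} ∩ C_i = {e_i}` for `1 ≤ i ≤ k`
    (hinter : ∀ i : Fin k, C i.castSucc ∩ C i.succ = {e i.succ})
    -- `C_i ∩ C_j = ∅` whenever `|i - j| ≥ 2`
    (hdisj : ∀ i j : Fin (k + 1), i.val + 2 ≤ j.val → C i ∩ C j = ∅)
    -- `e₀ ∈ C₀ \ {e₁}`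
    (he0 : e 0 ∈ C 0) (he01 : ∀ i : Fin (k + 1), i.val = 1 → e 0 ≠ e i)
    -- `e'_i ∈ C_{i-1} \ {e_{i-1}, e_i}` for `1 ≤ i ≤ k` (with `e' i` playing `e'_{i+1}`)
    (e' : Fin k → α)
    (he' : ∀ i : Fin k, e' i ∈ C i.castSucc ∧ e' i ≠ e i.castSucc ∧ e' i ≠ e i.succ)
    -- `M₀ = M` and `M_i = M_{i-1} / (C_{i-1} \ {e_i, e'_i})` for `1 ≤ i ≤ k`
    (Ms : Fin (k + 1) → Matroid α) (hMs0 : Ms 0 = M)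
    (hMsStep : ∀ i : Fin k,
      IsContractionBy (Ms i.castSucc) (C i.castSucc \ {e i.succ, e' i}) (Ms i.succ))
    -- `C_i` is a circuit of `M_i` for every `i`
    (hcirc : ∀ i : Fin (k + 1), IsCircuitOf (Ms i) (C i)) :
    -- conclusion: `M` has a circuit of size `L` with `L² ≥ |C₀| + |C₁| + ⋯ + |C_k|`
    ∃ Z : Set α, IsCircuitOf M Z ∧ ∑ i : Fin (k + 1), (C i).ncard ≤ Z.ncard ^ 2 := by
  have hCfin (i) : (C i).Finite := finite_of_ncard_pos (zero_lt_three.trans_le (hcard i))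
  have hchain : IsCircuitChain Ms C e e' :=
    { isCircuit i := isCircuitOf_iff_isCircuit.1 (hcirc i)
      eq_contract i := (hMsStep i).eq_contract (isRkFinite_of_finite _ (hCfin _).sdiff)
      inter_eq := hinter
      disjoint i j hij := disjoint_iff_inter_eq_empty.2 (hdisj i j hij)
      e_zero_mem := he0
      e_zero_ne := he01
      e'_mem i := by simpa using he' i }
  obtain ⟨Z, hZC, hZ, hsum⟩ := exists_circuit_sq_ge_sum_of_circuit_chain_general hchain
  have hZfin : Z.Finite := (finite_iUnion hCfin).subset hZC
  refine ⟨Z, isCircuitOf_iff_isCircuit.2 (hMs0 ▸ hZ), ?_⟩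
  simp only [← (hCfin _).cast_ncard_eq, ← hZfin.cast_ncard_eq] at hsum
  exact_mod_cast hsum
end
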